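/- arXiv:1310.6056 — 2 statements merged into one kernel-verified Lean document; each statement's English description precedes it below -/
import Mathlib

section
/- For every positive integer n, the number of pairs (x, y) ∈ ℤ² with x² + xy + y² = n, x ≡ 1 (mod 3), and y ≡ 0 (mod 3) equals ∑_{d|n} χ₋₃(d) − ∑_{d|(n/3)} χ₋₃(d). -/
open Finset

/-- The Kronecker symbol `(-3/d)` for positive `d`. -/
def chiM3 (d : ℕ) : ℤ := if d % 3 = 1 then 1 else if d % 3 = 2 then -1 else 0

/-- `Sdiv χ n k = ∑_{d ∣ n/k} χ d`, interpreted as `0` when `k` does not divide `n`. -/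
def Sdiv (χ : ℕ → ℤ) (n k : ℕ) : ℤ := if k ∣ n then ∑ d ∈ (n / k).divisors, χ d else 0

/-! Write the form as the norm of the Eisenstein integer `x + yω`, where `ω` is a primitive sixth
root of unity. The pairs being counted are then the *primary* elements `z ≡ 1 (mod 3)` of norm `n`.
There are none if `3 ∣ n`, and the right-hand side vanishes as well because `χ₋₃(3) = 0`.

For `n` prime to `3`, the number `r n` of primary elements of norm `n` and the divisor sum
`∑_{d ∣ n} χ₋₃(d)` both equal `1` at `n = 1` and satisfy the Hecke relation
`r (p n) = (1 + χ₋₃(p)) r n - χ₋₃(p) r (n / p)` for every prime `p ≠ 3`, where `r (n / p)` is read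
as `0` if `p ∤ n`; this determines them. If `z` is primary of norm `k`, then `z w` is primary
exactly when `w` is, so the multiples of `z` among the primary elements of norm `k n` number
`r n`. If `p ≡ 1 (mod 3)`, then `p = z * star z` splits, every element of norm `p n` is divisible
by `z` or `star z`, and by both exactly when it is divisible by `p`; inclusion-exclusion gives the
relation. If `p ≡ 2 (mod 3)`, then `p` is inert and divides every element of norm `p n`.
-/

theorem chiM3_mul (a b : ℕ) : chiM3 (a * b) = chiM3 a * chiM3 b := by
  have ha : a % 3 = 0 ∨ a % 3 = 1 ∨ a % 3 = 2 := by omega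
  have hb : b % 3 = 0 ∨ b % 3 = 1 ∨ b % 3 = 2 := by omega
  rcases ha with ha | ha | ha <;> rcases hb with hb | hb | hb <;> simp [chiM3, Nat.mul_mod, ha, hb]

theorem Sdiv_one (χ : ℕ → ℤ) (n : ℕ) : Sdiv χ n 1 = ∑ d ∈ n.divisors, χ d := by
  rw [Sdiv, if_pos (one_dvd n), Nat.div_one]

theorem Sdiv_eq_ite (χ : ℕ → ℤ) (n k : ℕ) :
    Sdiv χ n k = if k ∣ n then Sdiv χ (n / k) 1 else 0 := by
  rw [Sdiv_one, Sdiv]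

open scoped Pointwise in
theorem divisors_prime_mul {p : ℕ} (hp : p.Prime) (n : ℕ) :
    (p * n).divisors = n.divisors ∪ n.divisors.image (p * ·) := by
  rw [Nat.divisors_mul, hp.divisors, insert_eq, union_mul, singleton_one, one_mul,
    singleton_mul]
  rfl

theorem divisors_inter_image_mul {p : ℕ} (hp : 0 < p) (n : ℕ) :
    n.divisors ∩ n.divisors.image (p * ·) =
      if p ∣ n then (n / p).divisors.image (p * ·) else ∅ := by
  ext d
  split_ifs with hpn
  · obtain ⟨m, rfl⟩ := hpn
    rw [Nat.mul_div_cancel_left m hp]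
    simp only [mem_inter, mem_image, Nat.mem_divisors]
    constructor
    · rintro ⟨⟨hd, hpm⟩, e, -, rfl⟩
      exact ⟨e, ⟨Nat.dvd_of_mul_dvd_mul_left hp hd, right_ne_zero_of_mul hpm⟩, rfl⟩
    · rintro ⟨e, ⟨he, hm⟩, rfl⟩
      exact ⟨⟨mul_dvd_mul_left p he, mul_ne_zero hp.ne' hm⟩, e,
        ⟨he.mul_left p, mul_ne_zero hp.ne' hm⟩, rfl⟩
  · simp only [mem_inter, mem_image, Nat.mem_divisors, notMem_empty, iff_false]
    rintro ⟨⟨hd, -⟩, e, -, rfl⟩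
    exact hpn (dvd_of_mul_right_dvd hd)

theorem sum_image_mul_divisors {χ : ℕ → ℤ} {p : ℕ} (hp : 0 < p)
    (hχ : ∀ d, χ (p * d) = χ p * χ d) (n : ℕ) :
    ∑ d ∈ n.divisors.image (p * ·), χ d = χ p * Sdiv χ n 1 := by
  rw [sum_image (mul_right_injective₀ hp.ne').injOn, Sdiv_one, mul_sum]
  exact sum_congr rfl fun d _ ↦ hχ d

theorem Sdiv_prime_mul {χ : ℕ → ℤ} {p : ℕ} (hp : p.Prime) (hχ : ∀ d, χ (p * d) = χ p * χ d)
    (n : ℕ) : Sdiv χ (p * n) 1 = (1 + χ p) * Sdiv χ n 1 - χ p * Sdiv χ n p := by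
  have hinter : ∑ d ∈ n.divisors ∩ n.divisors.image (p * ·), χ d = χ p * Sdiv χ n p := by
    rw [divisors_inter_image_mul hp.pos, Sdiv_eq_ite]
    split_ifs
    · exact sum_image_mul_divisors hp.pos hχ (n / p)
    · rw [sum_empty, mul_zero]
  have hsum := sum_union_inter (s₁ := n.divisors) (s₂ := n.divisors.image (p * ·)) (f := χ)
  rw [← divisors_prime_mul hp, hinter, sum_image_mul_divisors hp.pos hχ, ← Sdiv_one,
    ← Sdiv_one] at hsum
  linarith

theorem two_mul_abs_sub_mul_round_le (a : ℤ) {m : ℤ} (hm : 0 < m) :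
    2 * |a - m * round (a / m : ℚ)| ≤ m := by
  have hm' : (0 : ℚ) < m := mod_cast hm
  have hscale : (a : ℚ) - m * round (a / m : ℚ) = m * (a / m - round (a / m : ℚ)) := by
    rw [mul_sub, mul_div_cancel₀ _ hm'.ne']
  qify
  rw [hscale, abs_mul, abs_of_pos hm']
  nlinarith [abs_sub_round (a / m : ℚ)]

theorem exists_sq_add_self_add_one_eq_zero {p : ℕ} [Fact p.Prime] (hp3 : p % 3 = 1) :
    ∃ t : ZMod p, t ^ 2 + t + 1 = 0 := by
  have hcard : 3 ∣ Fintype.card (ZMod p)ˣ := by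
    rw [ZMod.card_units]
    omega
  obtain ⟨u, hu⟩ := exists_prime_orderOf_dvd_card 3 hcard
  have hprim : IsPrimitiveRoot (u : ZMod p) 3 := by
    rw [← hu, ← orderOf_units]
    exact IsPrimitiveRoot.orderOf _
  have hroot := hprim.isRoot_cyclotomic three_pos
  rw [Polynomial.cyclotomic_three] at hroot
  exact ⟨u, by simpa using hroot⟩

theorem dvd_mul_sub_one_iff {R : Type*} [CommRing R] {a b c : R} (hb : a ∣ b - 1) :
    a ∣ b * c - 1 ↔ a ∣ c - 1 := by
  have h : b * c - 1 = (b - 1) * c + (c - 1) := by ring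
  rw [h]
  exact dvd_add_right (hb.mul_right c)

/-- The ring `ℤ[ω]` of Eisenstein integers, where the generator `ω` is chosen to be a primitive
sixth root of unity (`ω² = -1 + ω`), so that `x + yω` has norm `x² + xy + y²`. -/
abbrev EisensteinInt : Type := QuadraticAlgebra ℤ (-1) 1

namespace EisensteinInt

open QuadraticAlgebra

variable {z w : EisensteinInt} {p k n : ℕ}

theorem norm_eq (z : EisensteinInt) : z.norm = z.re ^ 2 + z.re * z.im + z.im ^ 2 := by
  rw [norm_def]
  ring

theorem four_mul_norm (z : EisensteinInt) :
    4 * z.norm = (2 * z.re + z.im) ^ 2 + 3 * z.im ^ 2 := by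
  rw [norm_eq]
  ring

theorem norm_nonneg (z : EisensteinInt) : 0 ≤ z.norm := by
  linarith [four_mul_norm z, sq_nonneg (2 * z.re + z.im), sq_nonneg z.im]

theorem norm_eq_zero_iff : z.norm = 0 ↔ z = 0 := by
  refine ⟨fun h ↦ ?_, fun h ↦ by rw [h, QuadraticAlgebra.norm_zero]⟩
  have hz := four_mul_norm z
  have him : z.im = 0 := by nlinarith [sq_nonneg (2 * z.re + z.im), sq_nonneg z.im]
  have hre : z.re = 0 := by simpa [norm_eq, him] using h
  exact QuadraticAlgebra.ext hre him

theorem norm_pos (hz : z ≠ 0) : 0 < z.norm :=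
  (norm_nonneg z).lt_of_ne' (mt norm_eq_zero_iff.mp hz)

theorem intCast_norm (z : EisensteinInt) : (z.norm : EisensteinInt) = z * star z :=
  algebraMap_norm_eq_mul_star z

theorem isUnit_iff_norm_eq_one : IsUnit z ↔ z.norm = 1 := by
  rw [isUnit_iff_norm_isUnit, Int.isUnit_iff]
  have := norm_nonneg z
  omega

noncomputable instance : Div EisensteinInt :=
  ⟨fun z w ↦ ⟨round ((z * star w).re / w.norm : ℚ), round ((z * star w).im / w.norm : ℚ)⟩⟩

theorem re_div (z w : EisensteinInt) : (z / w).re = round ((z * star w).re / w.norm : ℚ) := rfl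

theorem im_div (z w : EisensteinInt) : (z / w).im = round ((z * star w).im / w.norm : ℚ) := rfl

theorem norm_sub_mul_div_lt (z : EisensteinInt) (hw : w ≠ 0) :
    (z - w * (z / w)).norm < w.norm := by
  have hpos := norm_pos hw
  -- `e` is the remainder times `star w`, so its coordinates are rounding errors scaled by `w.norm`.
  set e : EisensteinInt := z * star w - w.norm * (z / w) with he
  have hre : 2 * |e.re| ≤ w.norm := by
    have h := two_mul_abs_sub_mul_round_le (z * star w).re hpos
    rw [← re_div] at h
    simpa [he] using h
  have him : 2 * |e.im| ≤ w.norm := by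
    have h := two_mul_abs_sub_mul_round_le (z * star w).im hpos
    rw [← im_div] at h
    simpa [he] using h
  have hnorm : e.norm = (z - w * (z / w)).norm * w.norm := by
    rw [← norm_star w, ← map_mul, he, intCast_norm]
    ring_nf
  have hlt : e.norm < w.norm * w.norm := by
    rw [norm_eq]
    have hcross : e.re * e.im ≤ |e.re| * |e.im| := abs_mul e.re e.im ▸ le_abs_self _
    nlinarith [sq_abs e.re, sq_abs e.im, abs_nonneg e.re, abs_nonneg e.im]
  rw [hnorm] at hlt
  exact lt_of_mul_lt_mul_right hlt hpos.le

noncomputable instance : EuclideanDomain EisensteinInt where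
  quotient := (· / ·)
  quotient_zero z := by ext <;> simp [re_div, im_div]
  remainder z w := z - w * (z / w)
  quotient_mul_add_remainder_eq z w := by ring
  r z w := z.norm.natAbs < w.norm.natAbs
  r_wellFounded := (measure fun z : EisensteinInt ↦ z.norm.natAbs).wf
  remainder_lt z w hw :=
    Int.natAbs_lt_natAbs_of_nonneg_of_lt (norm_nonneg _) (norm_sub_mul_div_lt z hw)
  mul_left_not_lt z w hw := by
    have := norm_pos hw
    rw [map_mul, Int.natAbs_mul, not_lt]
    exact Nat.le_mul_of_pos_right _ (by omega)

theorem prime_of_norm_eq (hp : p.Prime) (hz : z.norm = p) : Prime z := by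
  have : IsLocalHom (norm : EisensteinInt →* ℤ) := ⟨fun _ ↦ isUnit_iff_norm_isUnit.mpr⟩
  refine irreducible_iff_prime.mp (Irreducible.of_map (f := QuadraticAlgebra.norm) ?_)
  exact hz ▸ (Nat.prime_iff_prime_int.mp hp).irreducible

theorem prime_natCast_or_exists_norm_eq (hp : p.Prime) :
    Prime (p : EisensteinInt) ∨ ∃ z : EisensteinInt, z.norm = p := by
  have hunit : ¬ IsUnit (p : EisensteinInt) := by
    rw [isUnit_iff_norm_eq_one, QuadraticAlgebra.norm_natCast]
    exact_mod_cast (one_lt_pow₀ hp.one_lt two_ne_zero).ne'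
  refine (irreducible_or_factor hunit).imp Irreducible.prime ?_
  rintro ⟨z, w, hz, hw, hzw⟩
  have natAbs_norm_ne_one {x : EisensteinInt} (hx : ¬ IsUnit x) : x.norm.natAbs ≠ 1 := by
    rwa [Ne, ← Int.isUnit_iff_natAbs_eq, ← isUnit_iff_norm_isUnit]
  have hmul : z.norm.natAbs * w.norm.natAbs = p ^ 2 := by
    rw [← Int.natAbs_mul, ← map_mul, ← hzw, QuadraticAlgebra.norm_natCast, Int.natAbs_pow,
      Int.natAbs_natCast]
  have hzp := ((hp.mul_eq_prime_sq_iff (natAbs_norm_ne_one hz) (natAbs_norm_ne_one hw)).mp hmul).1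
  exact ⟨z, by rw [← hzp, Int.natAbs_of_nonneg (norm_nonneg z)]⟩

theorem star_dvd_star : star z ∣ star w ↔ z ∣ w := by
  refine ⟨fun h ↦ ?_, map_dvd (starRingEnd EisensteinInt)⟩
  simpa only [starRingEnd_apply, star_star] using map_dvd (starRingEnd EisensteinInt) h

theorem natCast_dvd_star : (p : EisensteinInt) ∣ star z ↔ (p : EisensteinInt) ∣ z := by
  rw [← star_dvd_star, star_star, star_natCast]

theorem not_prime_natCast_of_mod_three_eq_one (hp : p.Prime) (hp3 : p % 3 = 1) :
    ¬ Prime (p : EisensteinInt) := by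
  have := Fact.mk hp
  obtain ⟨t, ht⟩ := exists_sq_add_self_add_one_eq_zero hp3
  obtain ⟨t, rfl⟩ := ZMod.intCast_surjective t
  set z : EisensteinInt := ⟨t, 1⟩ with hz
  have hnorm : (p : ℤ) ∣ z.norm := by
    rw [← ZMod.intCast_zmod_eq_zero_iff_dvd, norm_eq]
    simpa [hz] using ht
  have hmul : (p : EisensteinInt) ∣ z * star z := by
    rw [← intCast_norm]
    exact_mod_cast Int.cast_dvd_cast (α := EisensteinInt) _ _ hnorm
  have hndvd : ¬ (p : EisensteinInt) ∣ z := by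
    rintro ⟨w, hw⟩
    have : (1 : ℤ) = p * w.im := by simpa [hz] using congr_arg QuadraticAlgebra.im hw
    exact (Nat.prime_iff_prime_int.mp hp).not_dvd_one ⟨_, this⟩
  exact fun hprime ↦ (hprime.dvd_or_dvd hmul).elim hndvd (hndvd ∘ natCast_dvd_star.mp)

theorem exists_norm_eq_of_mod_three_eq_one (hp : p.Prime) (hp3 : p % 3 = 1) :
    ∃ z : EisensteinInt, z.norm = p :=
  (prime_natCast_or_exists_norm_eq hp).resolve_left (not_prime_natCast_of_mod_three_eq_one hp hp3)

theorem norm_emod_three (z : EisensteinInt) : z.norm % 3 = (z.re - z.im) ^ 2 % 3 :=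
  Int.ModEq.symm (Int.modEq_iff_dvd.mpr ⟨z.re * z.im, by rw [norm_eq]; ring⟩)

theorem norm_emod_three_ne_two (z : EisensteinInt) : z.norm % 3 ≠ 2 := by
  rw [norm_emod_three, sq, Int.mul_emod]
  obtain h | h | h : (z.re - z.im) % 3 = 0 ∨ (z.re - z.im) % 3 = 1 ∨ (z.re - z.im) % 3 = 2 := by
    omega
  all_goals norm_num [h]

theorem prime_natCast_of_mod_three_eq_two (hp : p.Prime) (hp3 : p % 3 = 2) :
    Prime (p : EisensteinInt) := by
  refine (prime_natCast_or_exists_norm_eq hp).resolve_right ?_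
  rintro ⟨z, hz⟩
  have := norm_emod_three_ne_two z
  omega

/-- The primary Eisenstein integers, normalized by `z ≡ 1 (mod 3)`. An Eisenstein integer of norm
prime to `3` has exactly one primary associate. -/
def primary : Submonoid EisensteinInt where
  carrier := {z | 3 ∣ z - 1}
  one_mem' := by simp
  mul_mem' hz hw := (dvd_mul_sub_one_iff hz).mpr hw

theorem mem_primary : z ∈ primary ↔ 3 ∣ z - 1 := Iff.rfl

theorem mem_primary_iff_emod : z ∈ primary ↔ z.re % 3 = 1 ∧ z.im % 3 = 0 := by
  have h : z ∈ primary ↔ 3 ∣ (z - 1).re ∧ 3 ∣ (z - 1).im := algebraMap_dvd_iff (r := (3 : ℤ))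
  rw [h, re_sub, im_sub, re_one, im_one]
  omega

theorem mem_primary_or_neg_mem_primary (hre : ¬ 3 ∣ z.re) (him : 3 ∣ z.im) :
    z ∈ primary ∨ -z ∈ primary := by
  simp only [mem_primary_iff_emod, re_neg, im_neg]
  omega

theorem mul_mem_primary_iff (hz : z ∈ primary) : z * w ∈ primary ↔ w ∈ primary :=
  dvd_mul_sub_one_iff hz

theorem star_mem_primary (hz : z ∈ primary) : star z ∈ primary := by
  have h : star (3 : EisensteinInt) ∣ star (z - 1) := star_dvd_star.mpr hz
  simpa only [mem_primary, star_ofNat, star_sub, star_one] using h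

theorem norm_emod_three_of_mem_primary (hz : z ∈ primary) : z.norm % 3 = 1 := by
  obtain ⟨hre, him⟩ := mem_primary_iff_emod.mp hz
  rw [norm_emod_three, sq, Int.mul_emod, Int.sub_emod, hre, him]
  norm_num

theorem eq_one_of_mem_primary_of_isUnit (hz : z ∈ primary) (hunit : IsUnit z) : z = 1 := by
  obtain ⟨hre, him⟩ := mem_primary_iff_emod.mp hz
  have hnorm := four_mul_norm z
  rw [isUnit_iff_norm_eq_one.mp hunit] at hnorm
  have him0 : z.im = 0 := by
    have : -1 ≤ z.im ∧ z.im ≤ 1 := by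
      constructor <;> nlinarith [sq_nonneg (2 * z.re + z.im)]
    omega
  have hre1 : z.re = 1 := by
    have : -1 ≤ z.re ∧ z.re ≤ 1 := by
      rw [him0] at hnorm
      constructor <;> nlinarith
    omega
  exact QuadraticAlgebra.ext hre1 him0

theorem exists_three_dvd_im_norm_eq (hz : ¬ 3 ∣ z.norm) :
    ∃ w : EisensteinInt, 3 ∣ w.im ∧ w.norm = z.norm := by
  have hne : ¬ 3 ∣ z.re - z.im := fun h ↦ by
    have := norm_emod_three z
    rw [sq, Int.mul_emod, Int.emod_eq_zero_of_dvd h] at this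
    exact hz (Int.dvd_of_emod_eq_zero this)
  have hω : QuadraticAlgebra.norm (ω : EisensteinInt) = 1 := by simp [norm_eq]
  obtain h | h | h : 3 ∣ z.im ∨ 3 ∣ (ω * z).im ∨ 3 ∣ (ω * (ω * z)).im := by
    have hre : z.re % 3 = 0 ∨ z.re % 3 = 1 ∨ z.re % 3 = 2 := by omega
    simp only [re_mul, im_mul, omega_re, omega_im]
    rcases hre with hre | hre | hre <;> omega
  · exact ⟨z, h, rfl⟩
  · exact ⟨ω * z, h, by rw [map_mul, hω, one_mul]⟩
  · exact ⟨ω * (ω * z), h, by rw [map_mul, map_mul, hω, one_mul, one_mul]⟩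

theorem exists_mem_primary_norm_eq (hz : ¬ 3 ∣ z.norm) : ∃ w ∈ primary, w.norm = z.norm := by
  obtain ⟨w, him, hw⟩ := exists_three_dvd_im_norm_eq hz
  have hre : ¬ 3 ∣ w.re := fun h ↦ by
    rw [← hw, norm_eq] at hz
    exact hz (dvd_add (dvd_add (dvd_pow h two_ne_zero) (h.mul_right _)) (dvd_pow him two_ne_zero))
  rcases mem_primary_or_neg_mem_primary hre him with h | h
  · exact ⟨w, h, hw⟩
  · exact ⟨-w, h, by rw [QuadraticAlgebra.norm_neg, hw]⟩

/-- The primary Eisenstein integers of norm `n`. -/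
def primaryOfNorm (n : ℕ) : Set EisensteinInt := {z | z ∈ primary ∧ z.norm = n}

theorem finite_setOf_norm_eq (n : ℤ) : {z : EisensteinInt | z.norm = n}.Finite := by
  have hbox := (Set.finite_Icc (-(2 * n)) (2 * n)).prod (Set.finite_Icc (-(2 * n)) (2 * n))
  refine (hbox.preimage (equivProd (-1 : ℤ) 1).injective.injOn).subset fun z hz ↦ ?_
  have hnorm : z.re ^ 2 + z.re * z.im + z.im ^ 2 = n := by rw [← norm_eq, hz]
  have hre : z.re ^ 2 ≤ 2 * n := by nlinarith [sq_nonneg (2 * z.im + z.re)]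
  have him : z.im ^ 2 ≤ 2 * n := by nlinarith [sq_nonneg (2 * z.re + z.im)]
  have habs (a : ℤ) : |a| ≤ a ^ 2 := Int.abs_eq_natAbs a ▸ Int.natAbs_le_self_sq a
  exact ⟨abs_le.mp ((habs z.re).trans hre), abs_le.mp ((habs z.im).trans him)⟩

theorem finite_primaryOfNorm (n : ℕ) : (primaryOfNorm n).Finite :=
  (finite_setOf_norm_eq n).subset fun _ hz ↦ hz.2

theorem primaryOfNorm_one : primaryOfNorm 1 = {1} := by
  ext z
  refine ⟨fun ⟨hz, hnorm⟩ ↦ ?_, ?_⟩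
  · exact eq_one_of_mem_primary_of_isUnit hz (isUnit_iff_norm_eq_one.mpr (mod_cast hnorm))
  · rintro rfl
    exact ⟨one_mem primary, by simp⟩

theorem primaryOfNorm_eq_empty (hn : n % 3 ≠ 1) : primaryOfNorm n = ∅ := by
  refine Set.eq_empty_of_forall_notMem fun z ⟨hz, hnorm⟩ ↦ hn ?_
  have := norm_emod_three_of_mem_primary hz
  omega

theorem image_mul_primaryOfNorm (hk : k ≠ 0) (hz : z ∈ primaryOfNorm k) (n : ℕ) :
    (z * ·) '' primaryOfNorm n = {w ∈ primaryOfNorm (k * n) | z ∣ w} := by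
  have hmem (w : EisensteinInt) : z * w ∈ primaryOfNorm (k * n) ↔ w ∈ primaryOfNorm n := by
    simp only [primaryOfNorm, Set.mem_ofPred_eq, mul_mem_primary_iff hz.1, map_mul, hz.2,
      Nat.cast_mul]
    rw [mul_right_inj' (Nat.cast_ne_zero.mpr hk)]
  ext w
  constructor
  · rintro ⟨u, hu, rfl⟩
    exact ⟨(hmem u).mpr hu, dvd_mul_right z u⟩
  · rintro ⟨hw, u, rfl⟩
    exact ⟨u, (hmem u).mp hw, rfl⟩

theorem ncard_sep_dvd_primaryOfNorm_mul (hk : k ≠ 0) (hz : z ∈ primaryOfNorm k) (n : ℕ) :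
    {w ∈ primaryOfNorm (k * n) | z ∣ w}.ncard = (primaryOfNorm n).ncard := by
  have hz0 : z ≠ 0 := by
    rintro rfl
    exact hk (by simpa using hz.2.symm)
  rw [← image_mul_primaryOfNorm hk hz, Set.ncard_image_of_injective _ (mul_right_injective₀ hz0)]

theorem natCast_or_neg_natCast_mem_primaryOfNorm (hk : ¬ 3 ∣ k) :
    (k : EisensteinInt) ∈ primaryOfNorm (k * k) ∨ -(k : EisensteinInt) ∈ primaryOfNorm (k * k) := by
  have hnorm : (k : EisensteinInt).norm = (k * k : ℕ) := by
    rw [QuadraticAlgebra.norm_natCast, sq, Nat.cast_mul]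
  refine (mem_primary_or_neg_mem_primary ?_ ?_).imp (⟨·, hnorm⟩)
    (⟨·, by rw [QuadraticAlgebra.norm_neg, hnorm]⟩)
  · rw [re_natCast]
    exact_mod_cast hk
  · rw [im_natCast]
    exact dvd_zero 3

theorem ncard_sep_natCast_dvd_primaryOfNorm_mul (hk : ¬ 3 ∣ k) (n : ℕ) :
    {w ∈ primaryOfNorm (k * n) | (k : EisensteinInt) ∣ w}.ncard =
      if k ∣ n then (primaryOfNorm (n / k)).ncard else 0 := by
  have hk0 : k ≠ 0 := by rintro rfl; exact hk (dvd_zero 3)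
  split_ifs with hkn
  · obtain ⟨m, rfl⟩ := hkn
    rw [Nat.mul_div_cancel_left m (Nat.pos_of_ne_zero hk0), ← mul_assoc]
    rcases natCast_or_neg_natCast_mem_primaryOfNorm hk with h | h
    · exact ncard_sep_dvd_primaryOfNorm_mul (mul_ne_zero hk0 hk0) h m
    · simpa only [neg_dvd] using ncard_sep_dvd_primaryOfNorm_mul (mul_ne_zero hk0 hk0) h m
  · convert Set.ncard_empty EisensteinInt
    refine Set.eq_empty_of_forall_notMem ?_
    rintro _ ⟨⟨-, hnorm⟩, w, rfl⟩
    rw [map_mul, QuadraticAlgebra.norm_natCast, sq, mul_assoc, Nat.cast_mul,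
      mul_right_inj' (Nat.cast_ne_zero.mpr hk0)] at hnorm
    exact hkn (Int.natCast_dvd_natCast.mp ⟨_, hnorm.symm⟩)

theorem dvd_or_dvd_star (hz : Prime z) (hdvd : z.norm ∣ w.norm) : z ∣ w ∨ z ∣ star w := by
  refine hz.dvd_or_dvd ?_
  rw [← intCast_norm w]
  refine dvd_trans ?_ (Int.cast_dvd_cast (α := EisensteinInt) _ _ hdvd)
  rw [intCast_norm]
  exact dvd_mul_right z (star z)

theorem not_star_dvd (hp : p.Prime) (hz : z ∈ primaryOfNorm p) : ¬ star z ∣ z := by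
  rintro ⟨u, hu⟩
  have hstar := star_mem_primary hz.1
  have hu_mem : u ∈ primary := (mul_mem_primary_iff hstar).mp (hu ▸ hz.1)
  have hu_unit : IsUnit u := by
    have hnorm := congr_arg QuadraticAlgebra.norm hu
    rw [map_mul, QuadraticAlgebra.norm_star, hz.2] at hnorm
    exact isUnit_iff_norm_eq_one.mpr ((mul_eq_left₀ (mod_cast hp.ne_zero)).mp hnorm.symm)
  rw [eq_one_of_mem_primary_of_isUnit hu_mem hu_unit, mul_one] at hu
  have him : z.im = 0 := by
    have := congr_arg QuadraticAlgebra.im hu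
    rw [im_star] at this
    omega
  have hsq : z.re ^ 2 = p := by simpa [norm_eq, him] using hz.2
  exact (Nat.prime_iff_prime_int.mp hp).irreducible.not_isSquare ⟨z.re, by rw [← hsq, sq]⟩

theorem natCast_dvd_iff_of_mem_primaryOfNorm (hp : p.Prime) (hz : z ∈ primaryOfNorm p) :
    (p : EisensteinInt) ∣ w ↔ z ∣ w ∧ star z ∣ w := by
  have hmul : (p : EisensteinInt) = z * star z := by rw [← intCast_norm, hz.2, Int.cast_natCast]
  have hcoprime : IsCoprime z (star z) := by
    have hprime : Prime (star z) :=
      prime_of_norm_eq hp (by rw [QuadraticAlgebra.norm_star, hz.2])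
    exact (hprime.irreducible.coprime_iff_not_dvd.mpr (not_star_dvd hp hz)).symm
  rw [hmul]
  exact ⟨fun h ↦ ⟨dvd_of_mul_right_dvd h, dvd_of_mul_left_dvd h⟩, fun h ↦ hcoprime.mul_dvd h.1 h.2⟩

theorem ncard_primaryOfNorm_mul_add_ncard_sep_natCast_dvd (hp : p.Prime)
    (hz : z ∈ primaryOfNorm p) (n : ℕ) :
    (primaryOfNorm (p * n)).ncard +
        {w ∈ primaryOfNorm (p * n) | (p : EisensteinInt) ∣ w}.ncard =
      2 * (primaryOfNorm n).ncard := by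
  have hstar : star z ∈ primaryOfNorm p :=
    ⟨star_mem_primary hz.1, by rw [QuadraticAlgebra.norm_star, hz.2]⟩
  set s : Set EisensteinInt := {w ∈ primaryOfNorm (p * n) | z ∣ w} with hs
  set t : Set EisensteinInt := {w ∈ primaryOfNorm (p * n) | star z ∣ w} with ht
  have hunion : s ∪ t = primaryOfNorm (p * n) := by
    rw [hs, ht, ← Set.sep_or, Set.sep_eq_self_iff_mem_true]
    intro w hw
    have hdvd : z.norm ∣ w.norm := by rw [hz.2, hw.2, Nat.cast_mul]; exact dvd_mul_right _ _
    refine (dvd_or_dvd_star (prime_of_norm_eq hp hz.2) hdvd).imp_right fun h ↦ ?_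
    rwa [← star_dvd_star, star_star]
  have hinter : s ∩ t = {w ∈ primaryOfNorm (p * n) | (p : EisensteinInt) ∣ w} := by
    simp only [hs, ht, ← Set.sep_and, natCast_dvd_iff_of_mem_primaryOfNorm hp hz]
  have hfin := finite_primaryOfNorm (p * n)
  rw [← hinter, two_mul]
  nth_rw 1 [← hunion]
  rw [Set.ncard_union_add_ncard_inter s t (hfin.sep _) (hfin.sep _),
    ncard_sep_dvd_primaryOfNorm_mul hp.ne_zero hz, ncard_sep_dvd_primaryOfNorm_mul hp.ne_zero hstar]

theorem sep_natCast_dvd_primaryOfNorm_of_prime (hp : Prime (p : EisensteinInt)) (n : ℕ) :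
    {w ∈ primaryOfNorm (p * n) | (p : EisensteinInt) ∣ w} = primaryOfNorm (p * n) := by
  rw [Set.sep_eq_self_iff_mem_true]
  intro w hw
  have hdvd : (p : EisensteinInt) ∣ w * star w := by
    rw [← intCast_norm, hw.2]
    exact_mod_cast Nat.cast_dvd_cast (dvd_mul_right p n)
  exact (hp.dvd_or_dvd hdvd).elim id natCast_dvd_star.mp

theorem ncard_primaryOfNorm_prime_mul (hp : p.Prime) (hp3 : ¬ 3 ∣ p) (n : ℕ) :
    ((primaryOfNorm (p * n)).ncard : ℤ) = (1 + chiM3 p) * (primaryOfNorm n).ncard -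
      chiM3 p * if p ∣ n then ((primaryOfNorm (n / p)).ncard : ℤ) else 0 := by
  have hdvd : (if p ∣ n then ((primaryOfNorm (n / p)).ncard : ℤ) else 0) =
      {w ∈ primaryOfNorm (p * n) | (p : EisensteinInt) ∣ w}.ncard := by
    rw [ncard_sep_natCast_dvd_primaryOfNorm_mul hp3, Nat.cast_ite, Nat.cast_zero]
  rw [hdvd]
  obtain h | h : p % 3 = 1 ∨ p % 3 = 2 := by omega
  · obtain ⟨u, hu⟩ := exists_norm_eq_of_mod_three_eq_one hp h
    obtain ⟨z, hz, hzu⟩ := exists_mem_primary_norm_eq (z := u) (by omega)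
    have hsplit := ncard_primaryOfNorm_mul_add_ncard_sep_natCast_dvd hp ⟨hz, hzu.trans hu⟩ n
    have hχ : chiM3 p = 1 := by simp [chiM3, h]
    rw [hχ]
    omega
  · have hχ : chiM3 p = -1 := by simp [chiM3, h]
    rw [hχ, sep_natCast_dvd_primaryOfNorm_of_prime (prime_natCast_of_mod_three_eq_two hp h)]
    ring

theorem ncard_primaryOfNorm_eq_Sdiv (n : ℕ) (hn : ¬ 3 ∣ n) :
    ((primaryOfNorm n).ncard : ℤ) = Sdiv chiM3 n 1 := by
  induction n using Nat.strong_induction_on with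
  | _ n ih =>
    rcases eq_or_ne n 1 with rfl | hn1
    · rw [primaryOfNorm_one, Set.ncard_singleton, Sdiv_one, Nat.divisors_one, sum_singleton]
      rfl
    obtain ⟨p, hp, m, rfl⟩ := Nat.exists_prime_and_dvd hn1
    have hp3 : ¬ 3 ∣ p := fun h ↦ hn (h.mul_right m)
    have hm3 : ¬ 3 ∣ m := fun h ↦ hn (h.mul_left p)
    have hm0 : 0 < m := Nat.pos_of_ne_zero (by rintro rfl; exact hm3 (dvd_zero 3))
    have hlt : m < p * m := lt_mul_left hm0 hp.one_lt
    rw [ncard_primaryOfNorm_prime_mul hp hp3, Sdiv_prime_mul hp (chiM3_mul p), ih m hlt hm3,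
      Sdiv_eq_ite chiM3 m p]
    split_ifs with hpm
    · rw [ih (m / p) ((Nat.div_le_self m p).trans_lt hlt) fun h ↦
        hm3 (h.trans (Nat.div_dvd_of_dvd hpm))]
    · rfl

theorem ncard_setOf_eq_ncard_primaryOfNorm (n : ℕ) :
    {p : ℤ × ℤ | p.1 ^ 2 + p.1 * p.2 + p.2 ^ 2 = (n : ℤ) ∧ p.1 % 3 = 1 ∧ p.2 % 3 = 0}.ncard =
      (primaryOfNorm n).ncard := by
  rw [← Set.ncard_image_of_injective _ (equivProd (-1 : ℤ) 1).injective,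
    Equiv.image_eq_preimage_symm]
  congr 1
  ext p
  simp only [Set.mem_preimage, primaryOfNorm, Set.mem_ofPred_eq, mem_primary_iff_emod, norm_eq]
  exact and_comm

end EisensteinInt

theorem rep_x2_xy_y2_x1mod3_y0mod3 (n : ℕ) (hn : 0 < n) :
    ({p : ℤ × ℤ | p.1 ^ 2 + p.1 * p.2 + p.2 ^ 2 = (n : ℤ) ∧ p.1 % 3 = 1 ∧ p.2 % 3 = 0}.ncard : ℤ) =
      Sdiv chiM3 n 1 - Sdiv chiM3 n 3 := by
  rw [EisensteinInt.ncard_setOf_eq_ncard_primaryOfNorm]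
  by_cases h3 : 3 ∣ n
  · obtain ⟨m, rfl⟩ := h3
    have hSdiv : Sdiv chiM3 (3 * m) 3 = Sdiv chiM3 m 1 := by
      rw [Sdiv_eq_ite, if_pos (dvd_mul_right 3 m), Nat.mul_div_cancel_left m three_pos]
    have hχ : chiM3 3 = 0 := rfl
    rw [EisensteinInt.primaryOfNorm_eq_empty (by omega), Set.ncard_empty, hSdiv,
      Sdiv_prime_mul Nat.prime_three (chiM3_mul 3), hχ]
    ring
  · rw [EisensteinInt.ncard_primaryOfNorm_eq_Sdiv n h3, Sdiv_eq_ite chiM3 n 3, if_neg h3, sub_zero]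
end

section
/- For every positive integer n, the number of pairs (x, y) ∈ ℤ² with x² + 2y² = n, x ≡ 0 (mod 2), and y ≡ 1 (mod 2) equals 2 ∑_{d|(n/2)} χ₋₈(d) − 2 ∑_{d|(n/4)} χ₋₈(d). -/
open Finset

/-- The Kronecker symbol `(-8/d)` for positive `d`. -/
def chiM8 (d : ℕ) : ℤ :=
  if d % 8 = 1 ∨ d % 8 = 3 then 1 else if d % 8 = 5 ∨ d % 8 = 7 then -1 else 0

/-!
Write `x² + 2y² = N(x + y√-2)` and let `r(n)` be the number of elements of norm `n` in `ℤ[√-2]`.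
The conditions `x` even, `y` odd say that `√-2` divides `x + y√-2` but `2` does not, and
multiplication by `w` is a bijection from the elements of norm `n / N(w)` to the multiples of `w` of
norm `n`. So the count is `r(n/2) - r(n/4)`, and it remains to see that
`r(m) = 2 ∑_{d ∣ m} χ₋₈(d)`. Both sides obey the recursion
`F(pm) = (1 + χ₋₈(p)) F(m) - χ₋₈(p) F(m/p)` for every prime `p`: for `r` it is inclusion–exclusion
for divisibility by the factors of `p`, which is ramified, split or inert according to
`χ₋₈(p) = 0, 1, -1`.
-/

section Hecke

variable {R : Type*}

/-- The value `F (n / k)` of an arithmetic function, with `F` extended by `0` to non-integers. -/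
def evalDiv [Zero R] (F : ℕ → R) (n k : ℕ) : R := if k ∣ n then F (n / k) else 0

theorem evalDiv_mul_left [Zero R] (F : ℕ → R) {k : ℕ} (hk : k ≠ 0) (n : ℕ) :
    evalDiv F (k * n) k = F n := by
  rw [evalDiv, if_pos (dvd_mul_right k n), Nat.mul_div_cancel_left n (Nat.pos_of_ne_zero hk)]

theorem evalDiv_mul_mul_left [Zero R] (F : ℕ → R) {k : ℕ} (hk : k ≠ 0) (n l : ℕ) :
    evalDiv F (k * n) (k * l) = evalDiv F n l := by
  simp only [evalDiv, mul_dvd_mul_iff_left hk, Nat.mul_div_mul_left n l (Nat.pos_of_ne_zero hk)]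

variable [CommRing R]

/-- The divisor sum `n ↦ ∑_{d ∣ n} χ d`, i.e. the Dirichlet convolution of `χ` with `1`. -/
def divisorSum (χ : ℕ → R) (n : ℕ) : R := ∑ d ∈ n.divisors, χ d

/-- The recursion of a Hecke eigenform of weight one and character `χ` whose eigenvalue at each
prime `p` is `1 + χ p`. -/
def HeckeRelation (χ F : ℕ → R) : Prop :=
  ∀ ⦃p n : ℕ⦄, p.Prime → n ≠ 0 → F (p * n) = (1 + χ p) * F n - χ p * evalDiv F n p

theorem sum_divisors_filter_dvd (χ : ℕ →* R) {k : ℕ} (hk : k ≠ 0) (n : ℕ) :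
    ∑ d ∈ n.divisors with k ∣ d, χ d = χ k * evalDiv (divisorSum χ) n k := by
  by_cases hkn : k ∣ n
  · obtain ⟨m, rfl⟩ := hkn
    have himage : {d ∈ (k * m).divisors | k ∣ d} = m.divisors.image (k * ·) := by
      ext d
      simp only [mem_filter, mem_image, Nat.mem_divisors]
      constructor
      · rintro ⟨⟨hdvd, hne⟩, e, rfl⟩
        exact ⟨e, ⟨(mul_dvd_mul_iff_left hk).1 hdvd, right_ne_zero_of_mul hne⟩, rfl⟩
      · rintro ⟨e, ⟨hdvd, hne⟩, rfl⟩
        exact ⟨⟨mul_dvd_mul_left k hdvd, mul_ne_zero hk hne⟩, dvd_mul_right k e⟩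
    rw [himage, sum_image fun a _ b _ hab => mul_left_cancel₀ hk hab, evalDiv_mul_left _ hk,
      divisorSum, mul_sum]
    exact sum_congr rfl fun e _ => map_mul χ k e
  · rw [evalDiv, if_neg hkn, mul_zero, filter_false_of_mem, sum_empty]
    exact fun d hd hkd => hkn (hkd.trans (Nat.dvd_of_mem_divisors hd))

theorem divisors_prime_mul_filter_not_dvd {p : ℕ} (hp : p.Prime) (n : ℕ) :
    {d ∈ (p * n).divisors | ¬ p ∣ d} = {d ∈ n.divisors | ¬ p ∣ d} := by
  ext d
  simp only [mem_filter, Nat.mem_divisors, mul_ne_zero_iff, hp.ne_zero, ne_eq, not_false_eq_true,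
    true_and, and_congr_left_iff]
  intro hpd _
  exact ((hp.coprime_iff_not_dvd.2 hpd).symm).dvd_mul_left

theorem heckeRelation_divisorSum (χ : ℕ →* R) : HeckeRelation χ (divisorSum χ) := by
  intro p n hp _
  have hpn := sum_filter_add_sum_filter_not (p * n).divisors (p ∣ ·) χ
  have hn := sum_filter_add_sum_filter_not n.divisors (p ∣ ·) χ
  rw [divisors_prime_mul_filter_not_dvd hp, sum_divisors_filter_dvd χ hp.ne_zero,
    evalDiv_mul_left _ hp.ne_zero] at hpn
  rw [sum_divisors_filter_dvd χ hp.ne_zero] at hn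
  simp only [divisorSum] at hpn hn ⊢
  linear_combination hn - hpn

theorem HeckeRelation.eq_mul_divisorSum {χ : ℕ →* R} {F : ℕ → R} (hF : HeckeRelation χ F) {n : ℕ}
    (hn : n ≠ 0) : F n = F 1 * divisorSum χ n := by
  induction n using Nat.strong_induction_on with
  | _ n ih =>
    rcases eq_or_ne n 1 with rfl | hn1
    · simp [divisorSum]
    obtain ⟨p, hp, m, rfl⟩ := Nat.exists_prime_and_dvd hn1
    have hm : m ≠ 0 := right_ne_zero_of_mul hn
    have hlt : m < p * m := lt_mul_of_one_lt_left (Nat.pos_of_ne_zero hm) hp.one_lt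
    have hdiv : evalDiv F m p = F 1 * evalDiv (divisorSum χ) m p := by
      unfold evalDiv
      split_ifs with hpm
      · exact ih _ ((Nat.div_le_self m p).trans_lt hlt)
          (Nat.div_ne_zero_iff_of_dvd hpm |>.2 ⟨hm, hp.ne_zero⟩)
      · rw [mul_zero]
    rw [hF hp hm, heckeRelation_divisorSum χ hp hm, ih m hlt hm, hdiv]
    ring

end Hecke

section Divisibility

variable {d : ℤ} {π z : ℤ√d}

theorem mul_right_injective_of_norm_ne_zero {w : ℤ√d} (hw : w.norm ≠ 0) :
    Function.Injective (w * ·) := by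
  intro x y (hxy : w * x = w * y)
  refine Zsqrtd.eq_of_smul_eq_smul_left hw ?_
  rw [Zsqrtd.norm_eq_mul_conj]
  linear_combination star w * hxy

theorem dvd_of_norm_dvd_im_star_mul (hπ : Prime π.norm) (h : π.norm ∣ (star π * z).im) :
    π ∣ z := by
  have hre : π.norm ∣ (star π * z).re := by
    have hnorm := Zsqrtd.norm_mul (star π) z
    rw [Zsqrtd.norm_conj, Zsqrtd.norm_def (star π * z)] at hnorm
    refine hπ.dvd_of_dvd_pow (n := 2) ?_
    rw [show (star π * z).re ^ 2 = π.norm * z.norm + (star π * z).im * (d * (star π * z).im) by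
      linear_combination hnorm]
    exact dvd_add (dvd_mul_right _ _) (h.mul_right _)
  obtain ⟨w, hw⟩ := (Zsqrtd.intCast_dvd π.norm (star π * z)).2 ⟨hre, h⟩
  refine ⟨w, mul_right_injective_of_norm_ne_zero (w := star π) ?_ ?_⟩
  · rw [Zsqrtd.norm_conj]
    exact hπ.ne_zero
  · change star π * z = star π * (π * w)
    rw [hw, Zsqrtd.norm_eq_mul_conj]
    ring

theorem dvd_or_star_dvd_of_norm_dvd_norm (hπ : Prime π.norm) (hz : π.norm ∣ z.norm) :
    π ∣ z ∨ star π ∣ z := by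
  have hmul : π.norm ∣ (star π * z).im * (star (star π) * z).im := by
    rw [show (star π * z).im * (star (star π) * z).im
        = π.norm * z.im ^ 2 - z.norm * π.im ^ 2 by
      simp only [star_star, Zsqrtd.im_mul, Zsqrtd.re_star, Zsqrtd.im_star, Zsqrtd.norm_def]
      ring]
    exact dvd_sub (dvd_mul_right _ _) (hz.mul_right _)
  refine (hπ.dvd_or_dvd hmul).imp (dvd_of_norm_dvd_im_star_mul hπ) fun h => ?_
  rw [← Zsqrtd.norm_conj π] at hπ h
  exact dvd_of_norm_dvd_im_star_mul hπ h

theorem dvd_re_of_dvd_norm {q : ℤ} (hq : Prime q) (hd : q ∣ d) (hz : q ∣ z.norm) : q ∣ z.re := by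
  refine hq.dvd_of_dvd_pow (n := 2) ?_
  rw [show z.re ^ 2 = z.norm + d * z.im ^ 2 by rw [Zsqrtd.norm_def]; ring]
  exact dvd_add hz (hd.mul_right _)

theorem dvd_of_norm_dvd_norm_of_norm_dvd (hπ : Prime π.norm) (hd : π.norm ∣ d)
    (hz : π.norm ∣ z.norm) : π ∣ z := by
  refine dvd_of_norm_dvd_im_star_mul hπ ?_
  rw [Zsqrtd.im_mul, Zsqrtd.re_star]
  exact dvd_add ((dvd_re_of_dvd_norm hπ hd dvd_rfl).mul_right _)
    ((dvd_re_of_dvd_norm hπ hd hz).mul_left _)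

theorem not_norm_dvd_re (hπ : Prime π.norm) (hd : ¬ π.norm ∣ d) : ¬ π.norm ∣ π.re := by
  intro hre
  have him : π.norm ∣ π.im := by
    have hmul : π.norm ∣ d * π.im ^ 2 := by
      rw [show d * π.im ^ 2 = π.re * π.re - π.norm by rw [Zsqrtd.norm_def]; ring]
      exact dvd_sub (hre.mul_right _) dvd_rfl
    exact hπ.dvd_of_dvd_pow ((hπ.dvd_or_dvd hmul).resolve_left hd)
  obtain ⟨w, hw⟩ := (Zsqrtd.intCast_dvd π.norm π).2 ⟨hre, him⟩
  have hnorm : π.norm = π.norm * π.norm * w.norm := by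
    conv_lhs => rw [hw]
    rw [Zsqrtd.norm_mul, Zsqrtd.norm_intCast]
  refine hπ.not_isUnit (IsUnit.of_mul_eq_one w.norm (mul_left_cancel₀ hπ.ne_zero ?_))
  linear_combination -hnorm

theorem isCoprime_star_of_not_norm_dvd (hπ : Prime π.norm) (hd : ¬ π.norm ∣ d)
    (h2 : ¬ π.norm ∣ 2) : IsCoprime π (star π) := by
  have htrace : IsCoprime (2 * π.re) π.norm :=
    (hπ.coprime_iff_not_dvd.2 fun h => (hπ.dvd_or_dvd h).elim h2 (not_norm_dvd_re hπ hd)).symm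
  have hmap := htrace.map (Int.castRingHom (ℤ√d))
  have hadd : ((2 * π.re : ℤ) : ℤ√d) = star π + π * 1 := by
    ext <;> simp [two_mul]
  rw [eq_intCast, eq_intCast, hadd, Zsqrtd.norm_eq_mul_conj] at hmap
  exact hmap.of_mul_right_left.of_add_mul_left_left.symm

end Divisibility

section NormCount

variable {d : ℤ}

/-- The number of elements of norm `n` in `ℤ[√d]`, as an integer so that it can be subtracted. It is
meaningful for `d < 0`; for `d ≥ 0` the set may be infinite, in which case the value is `0`. -/
noncomputable def normCount (d : ℤ) (n : ℕ) : ℤ := ({z : ℤ√d | z.norm = n}.ncard : ℤ)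

theorem re_im_injective : Function.Injective fun z : ℤ√d => (z.re, z.im) := fun _ _ h =>
  Zsqrtd.ext (congrArg Prod.fst h) (congrArg Prod.snd h)

theorem finite_norm_eq (hd : d < 0) (n : ℤ) : {z : ℤ√d | z.norm = n}.Finite := by
  have himage : ((fun z : ℤ√d => (z.re, z.im)) '' {z | z.norm = n}).Finite := by
    refine ((Set.finite_Icc (-n) n).prod (Set.finite_Icc (-n) n)).subset ?_
    rintro _ ⟨z, hz, rfl⟩
    have hre : z.re ^ 2 ≤ n := by
      rw [← hz.out, Zsqrtd.norm_def]
      nlinarith [sq_nonneg z.im]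
    have him : z.im ^ 2 ≤ n := by
      rw [← hz.out, Zsqrtd.norm_def]
      nlinarith [sq_nonneg z.re, sq_nonneg z.im]
    have habs {a : ℤ} (ha : a ^ 2 ≤ n) : |a| ≤ n := (Int.le_self_sq |a|).trans (by rwa [sq_abs])
    exact ⟨abs_le.1 (habs hre), abs_le.1 (habs him)⟩
  exact himage.of_finite_image re_im_injective.injOn

theorem ncard_norm_eq_and_dvd {w : ℤ√d} {k : ℕ} (hw : w.norm = k) (hk : k ≠ 0) (n : ℕ) :
    ({z : ℤ√d | z.norm = n ∧ w ∣ z}.ncard : ℤ) = evalDiv (normCount d) n k := by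
  have hk' : (k : ℤ) ≠ 0 := mod_cast hk
  by_cases hkn : k ∣ n
  · obtain ⟨m, rfl⟩ := hkn
    have himage : {z : ℤ√d | z.norm = (k * m : ℕ) ∧ w ∣ z} = (w * ·) '' {z | z.norm = m} := by
      ext z
      constructor
      · rintro ⟨hz, v, rfl⟩
        rw [Zsqrtd.norm_mul, hw, Nat.cast_mul] at hz
        exact ⟨v, mul_left_cancel₀ hk' hz, rfl⟩
      · rintro ⟨v, hv, rfl⟩
        refine ⟨?_, dvd_mul_right w v⟩
        rw [Zsqrtd.norm_mul, hw, hv.out, Nat.cast_mul]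
    rw [himage, Set.ncard_image_of_injective _
      (mul_right_injective_of_norm_ne_zero (hw.trans_ne hk')), evalDiv_mul_left _ hk, normCount]
  · have hempty : {z : ℤ√d | z.norm = n ∧ w ∣ z} = ∅ := by
      refine Set.eq_empty_of_forall_notMem ?_
      rintro _ ⟨hz, v, rfl⟩
      rw [Zsqrtd.norm_mul, hw] at hz
      exact hkn (Int.natCast_dvd_natCast.1 ⟨v.norm, hz.symm⟩)
    rw [hempty, Set.ncard_empty, evalDiv, if_neg hkn, Nat.cast_zero]

theorem normCount_eq_evalDiv_of_forall_dvd {w : ℤ√d} {k : ℕ} (hw : w.norm = k) (hk : k ≠ 0) {n : ℕ}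
    (h : ∀ z : ℤ√d, z.norm = n → w ∣ z) : normCount d n = evalDiv (normCount d) n k := by
  have hset : {z : ℤ√d | z.norm = n} = {z : ℤ√d | z.norm = n ∧ w ∣ z} :=
    Set.ext fun z => (and_iff_left_of_imp (h z)).symm
  rw [← ncard_norm_eq_and_dvd hw hk, ← hset, normCount]

theorem norm_natCast_eq_cast_mul (k : ℕ) : (k : ℤ√d).norm = (k * k : ℕ) := by
  rw [Zsqrtd.norm_natCast, Nat.cast_mul]

theorem normCount_prime_mul_of_inert {p : ℕ} [hp : Fact p.Prime] (h : legendreSym p d = -1)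
    (n : ℕ) : normCount d (p * n) = evalDiv (normCount d) n p := by
  have hdvd (z : ℤ√d) (hz : z.norm = (p * n : ℕ)) : (p : ℤ√d) ∣ z := by
    have hnorm : (p : ℤ) ∣ z.re ^ 2 - d * z.im ^ 2 :=
      ⟨n, by rw [← Nat.cast_mul, ← hz, Zsqrtd.norm_def]; ring⟩
    exact_mod_cast (Zsqrtd.intCast_dvd p z).2 (legendreSym.prime_dvd_of_eq_neg_one h hnorm)
  rw [normCount_eq_evalDiv_of_forall_dvd (norm_natCast_eq_cast_mul p)
    (mul_ne_zero hp.out.ne_zero hp.out.ne_zero) hdvd, evalDiv_mul_mul_left _ hp.out.ne_zero]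

theorem normCount_prime_mul_of_ramified {p : ℕ} (hp : p.Prime) {π : ℤ√d} (hπ : π.norm = p)
    (hd : (p : ℤ) ∣ d) (n : ℕ) : normCount d (p * n) = normCount d n := by
  have hdvd (z : ℤ√d) (hz : z.norm = (p * n : ℕ)) : π ∣ z := by
    refine dvd_of_norm_dvd_norm_of_norm_dvd (hπ ▸ Nat.prime_iff_prime_int.1 hp) (hπ ▸ hd) ⟨n, ?_⟩
    rw [hz, hπ, Nat.cast_mul]
  rw [normCount_eq_evalDiv_of_forall_dvd hπ hp.ne_zero hdvd, evalDiv_mul_left _ hp.ne_zero]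

theorem normCount_prime_mul_of_split (hd : d < 0) {p : ℕ} (hp : p.Prime) (hp2 : p ≠ 2)
    (hpd : ¬ (p : ℤ) ∣ d) {π : ℤ√d} (hπ : π.norm = p) (n : ℕ) :
    normCount d (p * n) = 2 * normCount d n - evalDiv (normCount d) n p := by
  have hprime : Prime π.norm := hπ ▸ Nat.prime_iff_prime_int.1 hp
  have hcoprime : IsCoprime π (star π) := by
    refine isCoprime_star_of_not_norm_dvd hprime (hπ ▸ hpd) fun h => hp2 ?_
    rw [hπ] at h
    exact (Nat.prime_dvd_prime_iff_eq hp Nat.prime_two).1 (mod_cast h)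
  have hpmul : (p : ℤ√d) = π * star π := by
    rw [← Zsqrtd.norm_eq_mul_conj, hπ, Int.cast_natCast]
  set A := {z : ℤ√d | z.norm = (p * n : ℕ) ∧ π ∣ z}
  set B := {z : ℤ√d | z.norm = (p * n : ℕ) ∧ star π ∣ z}
  have hunion : A ∪ B = {z : ℤ√d | z.norm = (p * n : ℕ)} := by
    refine Set.Subset.antisymm (fun z hz => hz.elim And.left And.left) fun z hz => ?_
    refine (dvd_or_star_dvd_of_norm_dvd_norm hprime ⟨n, ?_⟩).imp (⟨hz, ·⟩) (⟨hz, ·⟩)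
    rw [hz.out, hπ, Nat.cast_mul]
  have hinter : A ∩ B = {z : ℤ√d | z.norm = (p * n : ℕ) ∧ (p : ℤ√d) ∣ z} := by
    ext z
    rw [hpmul]
    exact ⟨fun ⟨⟨hz, h⟩, _, h'⟩ => ⟨hz, hcoprime.mul_dvd h h'⟩,
      fun ⟨hz, h⟩ => ⟨⟨hz, dvd_of_mul_right_dvd h⟩, hz, dvd_of_mul_left_dvd h⟩⟩
  have hA : (A.ncard : ℤ) = normCount d n := by
    rw [ncard_norm_eq_and_dvd hπ hp.ne_zero, evalDiv_mul_left _ hp.ne_zero]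
  have hB : (B.ncard : ℤ) = normCount d n := by
    rw [ncard_norm_eq_and_dvd ((Zsqrtd.norm_conj π).trans hπ) hp.ne_zero,
      evalDiv_mul_left _ hp.ne_zero]
  have hAB : ((A ∩ B).ncard : ℤ) = evalDiv (normCount d) n p := by
    rw [hinter, ncard_norm_eq_and_dvd (norm_natCast_eq_cast_mul p)
      (mul_ne_zero hp.ne_zero hp.ne_zero), evalDiv_mul_mul_left _ hp.ne_zero]
  have hcard : ((A ∪ B).ncard : ℤ) + (A ∩ B).ncard = A.ncard + B.ncard := by
    exact_mod_cast Set.ncard_union_add_ncard_inter A B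
      ((finite_norm_eq hd _).subset fun _ => And.left)
      ((finite_norm_eq hd _).subset fun _ => And.left)
  rw [hunion, hA, hB, hAB] at hcard
  rw [normCount]
  linear_combination hcard

end NormCount

/-- Thue's lemma. -/
theorem exists_sq_le_and_dvd_sub_mul {n : ℕ} (hn : n ≠ 0) (t : ℤ) :
    ∃ x y : ℤ, (x ≠ 0 ∨ y ≠ 0) ∧ x ^ 2 ≤ n ∧ y ^ 2 ≤ n ∧ (n : ℤ) ∣ x - t * y := by
  have : NeZero n := ⟨hn⟩
  have hcard : #(univ : Finset (ZMod n)) < #(range (n.sqrt + 1) ×ˢ range (n.sqrt + 1)) := by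
    rw [card_univ, ZMod.card, card_product, card_range]
    exact Nat.lt_succ_sqrt n
  obtain ⟨⟨x, y⟩, hxy, ⟨x', y'⟩, hxy', hne, heq⟩ :=
    exists_ne_map_eq_of_card_lt_of_maps_to hcard
      (f := fun z : ℕ × ℕ => (z.1 : ZMod n) - t * z.2) fun _ _ => mem_coe.2 (mem_univ _)
  simp only [mem_product, mem_range] at hxy hxy'
  have hsq {a b : ℕ} (ha : a < n.sqrt + 1) (hb : b < n.sqrt + 1) : ((a : ℤ) - b) ^ 2 ≤ n := by
    have habs : |(a : ℤ) - b| ≤ n.sqrt := abs_le.2 ⟨by lia, by lia⟩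
    calc ((a : ℤ) - b) ^ 2 ≤ (n.sqrt : ℤ) ^ 2 := sq_le_sq' (abs_le.1 habs).1 (abs_le.1 habs).2
      _ ≤ n := mod_cast Nat.sqrt_le' n
  refine ⟨x - x', y - y', ?_, hsq hxy.1 hxy'.1, hsq hxy.2 hxy'.2, ?_⟩
  · contrapose! hne
    exact Prod.ext (by lia) (by lia)
  · rw [← ZMod.intCast_zmod_eq_zero_iff_dvd]
    push_cast
    linear_combination heq

theorem exists_ne_zero_dvd_norm_of_isSquare {d : ℤ} (hd : d < 0) {p : ℕ} (hp : p.Prime)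
    (h : IsSquare (d : ZMod p)) :
    ∃ z : ℤ√d, z ≠ 0 ∧ (p : ℤ) ∣ z.norm ∧ z.norm < (1 - d) * p := by
  obtain ⟨t, ht⟩ := h
  obtain ⟨t, rfl⟩ := ZMod.intCast_surjective t
  obtain ⟨x, y, hne, hx, hy, hdvd⟩ := exists_sq_le_and_dvd_sub_mul hp.ne_zero t
  have hx' : x ^ 2 < p := hx.lt_of_ne fun h =>
    (Nat.prime_iff_prime_int.1 hp).not_isSquare ⟨x, by rw [← h, sq]⟩
  refine ⟨⟨x, y⟩, fun h => ?_, ?_, ?_⟩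
  · obtain ⟨hx0, hy0⟩ := Zsqrtd.ext_iff.1 h
    exact hne.elim (· hx0) (· hy0)
  · rw [← ZMod.intCast_zmod_eq_zero_iff_dvd] at hdvd ⊢
    push_cast [Zsqrtd.norm_def] at hdvd ⊢
    linear_combination (x + t * y : ZMod p) * hdvd - (y : ZMod p) ^ 2 * ht
  · rw [Zsqrtd.norm_def]
    nlinarith

theorem norm_sqrtd_neg_two : (Zsqrtd.sqrtd : ℤ√(-2)).norm = (2 : ℕ) := by
  simp [Zsqrtd.norm_def]

theorem exists_norm_eq_of_isSquare_neg_two {p : ℕ} (hp : p.Prime)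
    (h : IsSquare ((-2 : ℤ) : ZMod p)) : ∃ π : ℤ√(-2), π.norm = p := by
  obtain ⟨z, hz, ⟨c, hc⟩, hlt⟩ := exists_ne_zero_dvd_norm_of_isSquare (by norm_num) hp h
  have hp0 : (0 : ℤ) < p := mod_cast hp.pos
  have hpos : 0 < z.norm := (Zsqrtd.norm_nonneg (by norm_num) z).lt_of_ne'
    (mt (Zsqrtd.norm_eq_zero_iff (by norm_num) z).1 hz)
  have hc0 : 0 < c := (mul_pos_iff_of_pos_left hp0).1 (hc ▸ hpos)
  have hc3 : c < 3 := lt_of_mul_lt_mul_left (by linarith : p * c < p * 3) hp0.le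
  obtain rfl | rfl : c = 1 ∨ c = 2 := by lia
  · exact ⟨z, by rw [hc, mul_one]⟩
  · obtain ⟨w, rfl⟩ : Zsqrtd.sqrtd ∣ z := by
      refine dvd_of_norm_dvd_norm_of_norm_dvd ?_ ?_ ?_ <;> rw [norm_sqrtd_neg_two]
      · exact Int.prime_two
      · norm_num
      · exact ⟨p, by rw [hc, mul_comm, Nat.cast_ofNat]⟩
    rw [Zsqrtd.norm_mul, norm_sqrtd_neg_two] at hc
    exact ⟨w, by push_cast at hc; linarith⟩

theorem chiM8_eq_χ₈' (n : ℕ) : chiM8 n = ZMod.χ₈' n := by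
  rw [ZMod.χ₈'_nat_eq_if_mod_eight, chiM8]
  split_ifs <;> lia

/-- `chiM8` as a completely multiplicative function. -/
def chiM8Hom : ℕ →* ℤ where
  toFun := chiM8
  map_one' := rfl
  map_mul' a b := by simp only [chiM8_eq_χ₈', Nat.cast_mul, map_mul]

theorem heckeRelation_normCount_neg_two : HeckeRelation chiM8Hom (normCount (-2)) := by
  intro p n hp _
  change _ = (1 + chiM8 p) * _ - chiM8 p * _
  rcases eq_or_ne p 2 with rfl | hp2
  · have hχ : chiM8 2 = 0 := rfl
    rw [normCount_prime_mul_of_ramified hp norm_sqrtd_neg_two (by norm_num), hχ]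
    ring
  · have := Fact.mk hp
    have hpd : ¬ (p : ℤ) ∣ -2 := fun h =>
      hp2 ((Nat.prime_dvd_prime_iff_eq hp Nat.prime_two).1 (by exact_mod_cast (dvd_neg.1 h)))
    have hpd' : ((-2 : ℤ) : ZMod p) ≠ 0 := mt (ZMod.intCast_zmod_eq_zero_iff_dvd _ p).1 hpd
    rw [chiM8_eq_χ₈', ← legendreSym.at_neg_two hp2]
    rcases legendreSym.eq_one_or_neg_one p hpd' with h | h
    · obtain ⟨π, hπ⟩ := exists_norm_eq_of_isSquare_neg_two hp ((legendreSym.eq_one_iff p hpd').1 h)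
      rw [normCount_prime_mul_of_split (by norm_num) hp hp2 hpd hπ, h]
      ring
    · rw [normCount_prime_mul_of_inert h, h]
      ring

theorem normCount_neg_two_one : normCount (-2) 1 = 2 := by
  have hset : {z : ℤ√(-2) | z.norm = (1 : ℕ)} = {1, -1} := by
    ext ⟨x, y⟩
    simp only [Set.mem_ofPred_eq, Set.mem_insert_iff, Set.mem_singleton_iff, Zsqrtd.ext_iff,
      Zsqrtd.norm_def, Zsqrtd.re_one, Zsqrtd.im_one, Zsqrtd.re_neg, Zsqrtd.im_neg, neg_zero,
      Nat.cast_one]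
    constructor
    · intro h
      have hy : y = 0 := Int.abs_lt_one_iff.1 (sq_lt_one_iff_abs_lt_one y |>.1 (by nlinarith))
      have hx : x = 1 ∨ x = -1 := mul_self_eq_one_iff.1 (by rw [hy] at h; linarith)
      exact hx.imp (⟨·, hy⟩) (⟨·, hy⟩)
    · rintro (⟨rfl, rfl⟩ | ⟨rfl, rfl⟩) <;> norm_num
  rw [normCount, hset, Set.ncard_pair (by decide)]
  rfl

theorem normCount_neg_two_eq {n : ℕ} (hn : n ≠ 0) :
    normCount (-2) n = 2 * divisorSum chiM8 n := by
  rw [heckeRelation_normCount_neg_two.eq_mul_divisorSum hn, normCount_neg_two_one]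
  rfl

theorem evalDiv_normCount_neg_two {n : ℕ} (hn : n ≠ 0) {k : ℕ} (hk : k ≠ 0) :
    evalDiv (normCount (-2)) n k = 2 * Sdiv chiM8 n k := by
  unfold evalDiv Sdiv
  split_ifs with hkn
  · exact normCount_neg_two_eq ((Nat.div_ne_zero_iff_of_dvd hkn).2 ⟨hn, hk⟩)
  · rw [mul_zero]

theorem sqrtd_dvd_iff {d : ℤ} (z : ℤ√d) : Zsqrtd.sqrtd ∣ z ↔ d ∣ z.re := by
  constructor
  · rintro ⟨w, rfl⟩
    simp
  · rintro ⟨a, ha⟩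
    exact ⟨⟨z.im, a⟩, by ext <;> simp [ha]⟩

theorem even_odd_iff_sqrtd_dvd_and_not_two_dvd (z : ℤ√(-2)) :
    z.re % 2 = 0 ∧ z.im % 2 = 1 ↔ Zsqrtd.sqrtd ∣ z ∧ ¬ 2 ∣ z := by
  have h2 := Zsqrtd.intCast_dvd 2 z
  push_cast at h2
  rw [sqrtd_dvd_iff, h2]
  lia

theorem ncard_sq_add_two_mul_sq_even_odd (n : ℕ) :
    ({p : ℤ × ℤ | p.1 ^ 2 + 2 * p.2 ^ 2 = (n : ℤ) ∧ p.1 % 2 = 0 ∧ p.2 % 2 = 1}.ncard : ℤ) =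
      evalDiv (normCount (-2)) n 2 - evalDiv (normCount (-2)) n 4 := by
  set A := {z : ℤ√(-2) | z.norm = n ∧ Zsqrtd.sqrtd ∣ z}
  set B := {z : ℤ√(-2) | z.norm = n ∧ 2 ∣ z}
  have himage : {p : ℤ × ℤ | p.1 ^ 2 + 2 * p.2 ^ 2 = (n : ℤ) ∧ p.1 % 2 = 0 ∧ p.2 % 2 = 1} =
      (fun z : ℤ√(-2) => (z.re, z.im)) '' (A \ B) := by
    ext ⟨x, y⟩
    have hnorm : (⟨x, y⟩ : ℤ√(-2)).norm = x ^ 2 + 2 * y ^ 2 := by rw [Zsqrtd.norm_def]; ring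
    have hparity := even_odd_iff_sqrtd_dvd_and_not_two_dvd ⟨x, y⟩
    constructor
    · rintro ⟨hn, hxy⟩
      obtain ⟨hA, hB⟩ := hparity.1 hxy
      exact ⟨⟨x, y⟩, ⟨⟨hnorm.trans hn, hA⟩, fun h => hB h.2⟩, rfl⟩
    · rintro ⟨z, ⟨⟨hn, hA⟩, hB⟩, hz⟩
      cases hz
      exact ⟨hnorm.symm.trans hn, hparity.2 ⟨hA, fun h => hB ⟨hn, h⟩⟩⟩
  have hsub : B ⊆ A := fun z hz =>
    ⟨hz.1, ((sqrtd_dvd_iff 2).2 (by norm_num)).trans hz.2⟩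
  have hcard : ((A \ B).ncard : ℤ) + B.ncard = A.ncard := by
    exact_mod_cast Set.ncard_sdiff_add_ncard_of_subset hsub
      ((finite_norm_eq (by norm_num) n).subset fun _ => And.left)
  rw [himage, Set.ncard_image_of_injective _ re_im_injective,
    ← ncard_norm_eq_and_dvd norm_sqrtd_neg_two two_ne_zero,
    ← ncard_norm_eq_and_dvd (w := 2) (by simp [Zsqrtd.norm_def]) four_ne_zero]
  exact eq_sub_of_add_eq hcard

theorem rep_x2_2y2_x0mod2_y1mod2 (n : ℕ) (hn : 0 < n) :
    ({p : ℤ × ℤ | p.1 ^ 2 + 2 * p.2 ^ 2 = (n : ℤ) ∧ p.1 % 2 = 0 ∧ p.2 % 2 = 1}.ncard : ℤ) =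
      2 * Sdiv chiM8 n 2 - 2 * Sdiv chiM8 n 4 := by
  rw [ncard_sq_add_two_mul_sq_even_odd, evalDiv_normCount_neg_two hn.ne' two_ne_zero,
    evalDiv_normCount_neg_two hn.ne' four_ne_zero]
end
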